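/- arXiv:1410.5499 — 3 statements merged into one kernel-verified Lean document; each statement's English description precedes it below -/
import Mathlib

section
/- (Theorem 2.) Let N ≥ 2, let R be an N×N real symmetric positive-definite matrix, let D be the (N−1)×(N−1) difference covariance matrix with entries D_{mn} = R_{NN} + R_{mn} − R_{mN} − R_{nN}, and let u, v ∈ ℝ^N with difference vectors Δu, Δv ∈ ℝ^{N−1} satisfying Δv ≠ Δu. Let λ > 0, set q = (Δv − Δu)ᵀ D⁻¹ (Δv − Δu) > 0 and Γ = ln λ + (1/2)·(Δv − Δu)ᵀ D⁻¹ (Δv + Δu). Then: (i) if Δy is distributed according to the multivariate Gaussian measure N(Δu, D) on ℝ^{N−1}, the false positive rate satisfies P( (Δv − Δu)ᵀ D⁻¹ Δy ≥ Γ ) = Q( (ln λ + q/2) / √q ); and (ii) if Δy is distributed according to N(Δv, D), the detection rate satisfies P( (Δv − Δu)ᵀ D⁻¹ Δy ≥ Γ ) = Q( (ln λ − q/2) / √q ). -/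
open Matrix MeasureTheory

/-- The multivariate Gaussian measure on `ℝ^N` with mean `μ` and (positive-definite)
covariance matrix `S`, given by its Lebesgue density
`((2π)^N det S)^{-1/2} exp(−(1/2)(x−μ)ᵀ S⁻¹ (x−μ))`. -/
noncomputable def mvGaussian {N : ℕ} (μ : Fin N → ℝ) (S : Matrix (Fin N) (Fin N) ℝ) :
    Measure (Fin N → ℝ) :=
  volume.withDensity fun x =>
    ENNReal.ofReal ((Real.sqrt ((2 * Real.pi) ^ N * S.det))⁻¹ *
      Real.exp (-(1 / 2) * ((x - μ) ⬝ᵥ (S⁻¹).mulVec (x - μ))))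

/-- The standard normal tail function `Q(x) = (1/√(2π)) ∫_x^∞ exp(−t²/2) dt`. -/
noncomputable def gaussQ (x : ℝ) : ℝ :=
  (Real.sqrt (2 * Real.pi))⁻¹ * ∫ t in Set.Ici x, Real.exp (-t ^ 2 / 2)

/-- The difference covariance matrix: for an `N×N` matrix `R` with `N = n+2`, the
`(N−1)×(N−1)` matrix with entries `D_{mk} = R_{NN} + R_{mk} − R_{mN} − R_{kN}`. -/
def diffMatrix {n : ℕ} (R : Matrix (Fin (n + 2)) (Fin (n + 2)) ℝ) :
    Matrix (Fin (n + 1)) (Fin (n + 1)) ℝ :=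
  fun m k =>
    R (Fin.last (n + 1)) (Fin.last (n + 1)) + R m.castSucc k.castSucc
      - R m.castSucc (Fin.last (n + 1)) - R k.castSucc (Fin.last (n + 1))

/-- The difference vector `Δg ∈ ℝ^{N−1}`, `(Δg)_m = g_m − g_N`. -/
def diffVec {n : ℕ} (g : Fin (n + 2) → ℝ) : Fin (n + 1) → ℝ :=
  fun m => g m.castSucc - g (Fin.last (n + 1))

open ProbabilityTheory

lemma diffMatrix_posDef {n : ℕ} (R : Matrix (Fin (n + 2)) (Fin (n + 2)) ℝ)
    (hs : R.IsSymm) (hR : R.PosDef) : (diffMatrix R).PosDef := by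
  let B : Matrix (Fin (n + 1)) (Fin (n + 2)) ℝ :=
    fun m => Fin.snoc (α := fun _ => ℝ) (Pi.single m 1) (-1)
  have hB1 : ∀ m k, B m (Fin.castSucc k) = (Pi.single m 1 : Fin (n + 1) → ℝ) k := by
    intro m k; simp only [B, Fin.snoc_castSucc]
  have hB2 : ∀ m, B m (Fin.last (n + 1)) = -1 := by
    intro m; simp only [B, Fin.snoc_last]
  have hB : diffMatrix R = B * R * Bᴴ := by
    ext m k
    have := hs.apply (Fin.last (n + 1)) k.castSucc
    have h1 : ∀ j, (B * R) m j = R m.castSucc j - R (Fin.last (n + 1)) j := by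
      intro j
      rw [Matrix.mul_apply, Fin.sum_univ_castSucc]
      simp only [hB1, hB2]
      simp [Pi.single_apply, sub_eq_add_neg]
    rw [Matrix.mul_apply, Fin.sum_univ_castSucc]
    simp only [h1, Matrix.conjTranspose_apply, hB1, hB2]
    simp only [diffMatrix, Pi.single_apply, star_trivial, mul_ite, mul_one, mul_zero,
      Finset.sum_ite_eq', Finset.sum_ite_eq, Finset.mem_univ, if_true]
    rw [← this]
    ring
  rw [hB]
  refine hR.mul_mul_conjTranspose_same ?_
  intro x y hxy
  ext m
  have := congrFun hxy m.castSucc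
  simpa only [Matrix.vecMul, dotProduct, hB1, Pi.single_apply, mul_ite, mul_one, mul_zero,
      Finset.sum_ite_eq', Finset.sum_ite_eq, Finset.mem_univ, if_true] using this

lemma pi_gaussian_eq {N : ℕ} :
    Measure.pi (fun _ : Fin N => gaussianReal 0 1) =
      volume.withDensity fun x => ENNReal.ofReal (∏ i, gaussianPDFReal 0 1 (x i)) := by
  refine Measure.pi_eq fun s hs => ?_
  rw [withDensity_apply _ (MeasurableSet.univ_pi hs), volume_pi, Measure.restrict_pi_pi,
    ← ofReal_integral_eq_lintegral_ofReal, integral_fintype_prod_eq_prod,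
    ENNReal.ofReal_prod_of_nonneg]
  · simp_rw [gaussianReal_apply_eq_integral 0 one_ne_zero]
  · intro i _
    exact integral_nonneg (gaussianPDFReal_nonneg _ _)
  · exact Integrable.fintype_prod (fun i => (integrable_gaussianPDFReal _ _).restrict)
  · exact ae_of_all _ fun x => Finset.prod_nonneg fun i _ => gaussianPDFReal_nonneg _ _ _

lemma mvGaussian_eq_map {N : ℕ} (μ : Fin N → ℝ) (A : Matrix (Fin N) (Fin N) ℝ)
    (hA : A.det ≠ 0) :
    mvGaussian μ (A * Aᵀ) =
      (Measure.pi (fun _ : Fin N => gaussianReal 0 1)).map (fun x => μ + A.mulVec x) := by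
  have hT : Measurable (fun x : Fin N → ℝ => μ + A.mulVec x) := by
    have : Continuous (fun x : Fin N → ℝ => μ + A.mulVec x) := by fun_prop
    exact this.measurable
  have hlin : Measurable (toLin' A) := by
    have : Continuous (fun x : Fin N → ℝ => A.mulVec x) := by fun_prop
    exact this.measurable
  have hmap : (volume : Measure (Fin N → ℝ)).map (fun x => μ + A.mulVec x)
      = ENNReal.ofReal (|(A.det)⁻¹|) • volume := by
    have h1 := Real.map_matrix_volume_pi_eq_smul_volume_pi hA
    have h2 : (fun x : Fin N → ℝ => μ + A.mulVec x) = (fun y => μ + y) ∘ (toLin' A) := by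
      ext x; simp
    rw [h2, ← Measure.map_map (measurable_const_add μ) hlin, h1, Measure.map_smul,
      map_add_left_eq_self]
  have hvol : (volume : Measure (Fin N → ℝ)) = ENNReal.ofReal (|A.det|) •
      (volume : Measure (Fin N → ℝ)).map (fun x => μ + A.mulVec x) := by
    rw [hmap, smul_smul, ← ENNReal.ofReal_mul (abs_nonneg _), ← abs_mul, mul_inv_cancel₀ hA]
    simp
  have hu : IsUnit A.det := isUnit_iff_ne_zero.mpr hA
  have huT : IsUnit Aᵀ.det := by simpa using hu
  have hquad : ∀ x : Fin N → ℝ, (A.mulVec x) ⬝ᵥ ((A * Aᵀ)⁻¹).mulVec (A.mulVec x) = x ⬝ᵥ x := by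
    intro x
    rw [Matrix.mul_inv_rev, ← Matrix.mulVec_mulVec, Matrix.mulVec_mulVec x A⁻¹ A,
      Matrix.nonsing_inv_mul _ hu, Matrix.one_mulVec, Matrix.dotProduct_mulVec,
      ← Matrix.vecMul_transpose, Matrix.vecMul_vecMul, Matrix.mul_nonsing_inv _ huT,
      Matrix.vecMul_one]
  have hg : Measurable fun x : Fin N → ℝ =>
      ENNReal.ofReal ((Real.sqrt ((2 * Real.pi) ^ N * (A * Aᵀ).det))⁻¹ *
      Real.exp (-(1 / 2) * ((x - μ) ⬝ᵥ ((A * Aᵀ)⁻¹).mulVec (x - μ)))) := by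
    apply Measurable.ennreal_ofReal
    apply Continuous.measurable
    fun_prop
  rw [pi_gaussian_eq]
  ext s hs
  rw [Measure.map_apply hT hs, mvGaussian, withDensity_apply _ hs,
    withDensity_apply _ (hT hs), hvol, Measure.restrict_smul, lintegral_smul_measure,
    setLIntegral_map hs hg hT, ← hvol, smul_eq_mul, ← lintegral_const_mul]
  swap
  · exact hg.comp hT
  congr 1
  ext x
  rw [← ENNReal.ofReal_mul (abs_nonneg _)]
  congr 1
  rw [add_sub_cancel_left, hquad]
  simp only [gaussianPDFReal, Finset.prod_mul_distrib, ← Real.exp_sum]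
  rw [Matrix.det_mul, Matrix.det_transpose, Real.sqrt_mul (by positivity),
    Real.sqrt_mul_self_eq_abs, mul_inv, ← mul_assoc]
  have : |A.det| ≠ 0 := abs_ne_zero.mpr hA
  congr 1
  · have hp : Real.sqrt ((2 * Real.pi) ^ N) = Real.sqrt (2 * Real.pi) ^ N := by
      rw [Real.sqrt_eq_iff_mul_self_eq (by positivity) (by positivity), ← mul_pow,
        Real.mul_self_sqrt (by positivity)]
    rw [hp]
    simp only [NNReal.coe_one, mul_one, Finset.prod_const, Finset.card_univ, Fintype.card_fin]
    rw [mul_comm, mul_assoc, inv_mul_cancel₀ this, mul_one, inv_pow]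
  · congr 1
    simp only [dotProduct, Finset.mul_sum]
    refine Finset.sum_congr rfl fun i _ => ?_
    simp
    ring

lemma gaussianReal_tail (x : ℝ) :
    gaussianReal 0 1 (Set.Ici x) = ENNReal.ofReal (gaussQ x) := by
  rw [gaussianReal_apply_eq_integral 0 one_ne_zero, gaussQ, ← integral_const_mul]
  simp [gaussianPDFReal]

lemma pi_map_dot {N : ℕ} (w : Fin N → ℝ) :
    (Measure.pi (fun _ : Fin N => gaussianReal 0 1)).map (fun x => w ⬝ᵥ x)
      = gaussianReal 0 (w ⬝ᵥ w).toNNReal := by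
  have h1 : (fun x : Fin N → ℝ => w ⬝ᵥ x) =
      (innerSL ℝ (WithLp.toLp 2 w : EuclideanSpace ℝ (Fin N))) ∘ (WithLp.toLp 2) := by
    ext x
    simp [PiLp.inner_apply, dotProduct, mul_comm]
  rw [h1, ← Measure.map_map (by fun_prop) (by fun_prop), map_pi_eq_stdGaussian,
    IsGaussian.map_eq_gaussianReal, integral_strongDual_stdGaussian, variance_dual_stdGaussian,
    innerSL_apply_norm, EuclideanSpace.real_norm_sq_eq]
  simp [dotProduct, pow_two]

lemma mvGaussian_tail {N : ℕ} (μ d : Fin N → ℝ) (D : Matrix (Fin N) (Fin N) ℝ) (hD : D.PosDef)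
    (Γ : ℝ) (hq : 0 < d ⬝ᵥ (D⁻¹).mulVec d) :
    mvGaussian μ D {y | Γ ≤ d ⬝ᵥ (D⁻¹).mulVec y} =
      ENNReal.ofReal (gaussQ ((Γ - d ⬝ᵥ (D⁻¹).mulVec μ) / Real.sqrt (d ⬝ᵥ (D⁻¹).mulVec d))) := by
  open scoped MatrixOrder in
  obtain ⟨A, hA, hDA⟩ : ∃ A : Matrix (Fin N) (Fin N) ℝ, A.det ≠ 0 ∧ D = A * Aᵀ := by
    obtain ⟨C, hC⟩ := CStarAlgebra.nonneg_iff_eq_star_mul_self.mp hD.posSemidef.nonneg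
    rw [Matrix.star_eq_conjTranspose] at hC
    refine ⟨Cᵀ, ?_, by simpa using hC⟩
    intro h
    have := hD.det_pos
    rw [hC, Matrix.det_mul] at this
    simp at h
    simp [h] at this
  have hu : IsUnit A.det := isUnit_iff_ne_zero.mpr hA
  have huT : IsUnit Aᵀ.det := by simpa using hu
  have hDs : (D⁻¹)ᵀ = D⁻¹ := by simpa [Matrix.IsHermitian] using hD.inv.isHermitian
  have hDu : IsUnit D.det := isUnit_iff_ne_zero.mpr hD.det_pos.ne'
  set w : Fin N → ℝ := Matrix.vecMul (Matrix.vecMul d D⁻¹) A with hw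
  have hww : w ⬝ᵥ w = d ⬝ᵥ (D⁻¹).mulVec d := by
    have he : ∀ e : Fin N → ℝ,
        (Matrix.vecMul e A) ⬝ᵥ (Matrix.vecMul e A) = (Matrix.vecMul e D) ⬝ᵥ e := by
      intro e
      rw [← Matrix.dotProduct_mulVec, ← Matrix.mulVec_transpose, Matrix.mulVec_mulVec, ← hDA,
        Matrix.dotProduct_mulVec]
    rw [hw, he, Matrix.vecMul_vecMul, Matrix.nonsing_inv_mul _ hDu, Matrix.vecMul_one,
      ← Matrix.mulVec_transpose, hDs]
  have hT : Measurable (fun x : Fin N → ℝ => μ + A.mulVec x) := by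
    have : Continuous (fun x : Fin N → ℝ => μ + A.mulVec x) := by fun_prop
    exact this.measurable
  have hms : MeasurableSet {y : Fin N → ℝ | Γ ≤ d ⬝ᵥ (D⁻¹).mulVec y} := by
    apply IsClosed.measurableSet
    apply isClosed_le <;> fun_prop
  have hdot : Measurable (fun x : Fin N → ℝ => w ⬝ᵥ x) := by
    have : Continuous (fun x : Fin N → ℝ => w ⬝ᵥ x) := by fun_prop
    exact this.measurable
  set q := d ⬝ᵥ (D⁻¹).mulVec d with hqd
  have hsq : 0 < Real.sqrt q := Real.sqrt_pos.mpr hq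
  have hpre : (fun x : Fin N → ℝ => μ + A.mulVec x) ⁻¹' {y | Γ ≤ d ⬝ᵥ (D⁻¹).mulVec y}
      = (fun x => w ⬝ᵥ x) ⁻¹' Set.Ici (Γ - d ⬝ᵥ (D⁻¹).mulVec μ) := by
    ext x
    simp only [Set.mem_preimage, Set.mem_ofPred_eq, Set.mem_Ici, Matrix.mulVec_add, dotProduct_add,
      sub_le_iff_le_add']
    rw [hw, ← Matrix.dotProduct_mulVec, ← Matrix.dotProduct_mulVec]
  have hmv : mvGaussian μ D = (Measure.pi (fun _ : Fin N => gaussianReal 0 1)).map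
      (fun x => μ + A.mulVec x) := by
    rw [← mvGaussian_eq_map μ A hA, ← hDA]
  have hsc : gaussianReal 0 q.toNNReal = (gaussianReal 0 1).map (Real.sqrt q * ·) := by
    rw [gaussianReal_map_const_mul]
    congr 1
    · simp
    · ext
      simp [Real.sq_sqrt hq.le, hq.le]
  rw [hmv, Measure.map_apply hT hms, hpre, ← Measure.map_apply hdot measurableSet_Ici, pi_map_dot,
    hww, hsc, Measure.map_apply (measurable_const_mul _) measurableSet_Ici, ← gaussianReal_tail]
  congr 1
  ext x
  simp [div_le_iff₀ hsq, mul_comm]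

/-- Theorem 2: with `q = (Δv−Δu)ᵀ D⁻¹ (Δv−Δu) > 0` and
`Γ = ln λ + (1/2)(Δv−Δu)ᵀ D⁻¹ (Δv+Δu)`, the false positive rate of the test
`(Δv−Δu)ᵀ D⁻¹ Δy ≥ Γ` under `Δy ∼ N(Δu,D)` is `Q((ln λ + q/2)/√q)` and the
detection rate under `Δy ∼ N(Δv,D)` is `Q((ln λ − q/2)/√q)`. -/
theorem drss_lvs_false_positive_and_detection_rates
    (n : ℕ) (R : Matrix (Fin (n + 2)) (Fin (n + 2)) ℝ)
    (hRsymm : R.IsSymm) (hRpd : R.PosDef)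
    (u v : Fin (n + 2) → ℝ) (hvu : diffVec v ≠ diffVec u)
    (lam : ℝ) (hlam : 0 < lam) :
    let D := diffMatrix R
    let q : ℝ := (diffVec v - diffVec u) ⬝ᵥ (D⁻¹).mulVec (diffVec v - diffVec u)
    let Γ : ℝ := Real.log lam
      + (1 / 2) * ((diffVec v - diffVec u) ⬝ᵥ (D⁻¹).mulVec (diffVec v + diffVec u))
    0 < q ∧
      (mvGaussian (diffVec u) D) {dy | Γ ≤ (diffVec v - diffVec u) ⬝ᵥ (D⁻¹).mulVec dy}
        = ENNReal.ofReal (gaussQ ((Real.log lam + q / 2) / Real.sqrt q)) ∧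
      (mvGaussian (diffVec v) D) {dy | Γ ≤ (diffVec v - diffVec u) ⬝ᵥ (D⁻¹).mulVec dy}
        = ENNReal.ofReal (gaussQ ((Real.log lam - q / 2) / Real.sqrt q)) := by
  intro D q Γ
  have hD : D.PosDef := diffMatrix_posDef R hRsymm hRpd
  have hd : diffVec v - diffVec u ≠ 0 := sub_ne_zero.mpr hvu
  have hq : 0 < q := by simpa only [star_trivial] using hD.inv.dotProduct_mulVec_pos hd
  have hDs : (D⁻¹)ᵀ = D⁻¹ := by simpa [Matrix.IsHermitian] using hD.inv.isHermitian
  refine ⟨hq, ?_, ?_⟩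
  · rw [mvGaussian_tail _ _ D hD Γ hq]
    congr 3
    simp only [Γ, q, Matrix.mulVec_add, Matrix.mulVec_sub, dotProduct_add, dotProduct_sub]
    ring
  · rw [mvGaussian_tail _ _ D hD Γ hq]
    congr 3
    simp only [Γ, q, Matrix.mulVec_add, Matrix.mulVec_sub, dotProduct_add, dotProduct_sub]
    ring
end

section
/- Let N ≥ 2, let g ∈ ℝ^N, let Δg ∈ ℝ^{N−1} be defined by (Δg)_m = g_m − g_N, and let D₀ = I_{N−1} + J where J is the (N−1)×(N−1) all-ones matrix. Then (Δg)ᵀ D₀⁻¹ (Δg) = ∑_{i=1}^N g_i² − (1/N)·(∑_{i=1}^N g_i)². -/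
open Matrix

/-- with `D₀ = I + J` (`J` the all-ones `(N−1)×(N−1)` matrix, `N = n+2`),
`(Δg)ᵀ D₀⁻¹ (Δg) = ∑ g_i² − (1/N)(∑ g_i)²`. -/
theorem diff_quadratic_form_identity_uncorrelated
    (n : ℕ) (g : Fin (n + 2) → ℝ) :
    let J : Matrix (Fin (n + 1)) (Fin (n + 1)) ℝ := fun _ _ => (1 : ℝ)
    let D₀ : Matrix (Fin (n + 1)) (Fin (n + 1)) ℝ := 1 + J
    diffVec g ⬝ᵥ (D₀⁻¹).mulVec (diffVec g)
      = (∑ i, g i ^ 2) - (((n : ℝ) + 2)⁻¹) * (∑ i, g i) ^ 2 := by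
  intro J D₀
  have hN : (n : ℝ) + 2 ≠ 0 := by positivity
  have hJ : ∀ i j, J i j = 1 := fun _ _ => rfl
  have hJJ : J * J = ((n : ℝ) + 1) • J := by
    ext i j
    simp [hJ, Matrix.mul_apply]
  have hmul : D₀ * (1 - ((n : ℝ) + 2)⁻¹ • J) = 1 := by
    have h : D₀ * (1 - ((n : ℝ) + 2)⁻¹ • J)
        = 1 + J - ((n : ℝ) + 2)⁻¹ • J - ((n : ℝ) + 2)⁻¹ • (J * J) := by
      simp only [D₀, add_mul, mul_sub, one_mul, mul_one, Matrix.mul_smul]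
      abel
    rw [h, hJJ]
    ext i j
    simp only [Matrix.add_apply, Matrix.sub_apply, Matrix.smul_apply, smul_eq_mul, hJ]
    field_simp
    ring
  rw [Matrix.inv_eq_right_inv hmul]
  have hv : (1 - ((n : ℝ) + 2)⁻¹ • J).mulVec (diffVec g)
      = fun i => diffVec g i - ((n : ℝ) + 2)⁻¹ * ∑ j, diffVec g j := by
    rw [Matrix.sub_mulVec, Matrix.one_mulVec, Matrix.smul_mulVec]
    ext i
    simp [J, Matrix.mulVec, dotProduct]
  rw [hv]
  have h1 : ∑ j, diffVec g j
      = (∑ i : Fin (n + 1), g i.castSucc) - ((n : ℝ) + 1) * g (Fin.last (n + 1)) := by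
    simp [diffVec, Finset.sum_sub_distrib]
  have h2 : ∑ j, diffVec g j * diffVec g j
      = (∑ i : Fin (n + 1), g i.castSucc ^ 2)
        - 2 * g (Fin.last (n + 1)) * (∑ i : Fin (n + 1), g i.castSucc)
        + ((n : ℝ) + 1) * g (Fin.last (n + 1)) ^ 2 := by
    have h3 : ∀ j, diffVec g j * diffVec g j
        = g j.castSucc ^ 2 - 2 * g (Fin.last (n + 1)) * g j.castSucc
          + g (Fin.last (n + 1)) ^ 2 := fun j => by
      simp only [diffVec]; ring
    simp only [h3, Finset.sum_add_distrib, Finset.sum_sub_distrib, ← Finset.mul_sum]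
    simp
  simp only [dotProduct, mul_sub, Finset.sum_sub_distrib, ← Finset.sum_mul]
  rw [h2, h1, Fin.sum_univ_castSucc (fun i => g i ^ 2), Fin.sum_univ_castSucc g]
  field_simp
  ring
end

section
/- (Theorem 3.) Let N ≥ 2, let R be an N×N real symmetric positive-definite matrix with difference covariance matrix D, let u, v ∈ ℝ^N, and suppose v − u is not a scalar multiple of the all-ones vector 1_N. Let p* = ((u − v)ᵀ R⁻¹ 1_N)/(1_Nᵀ R⁻¹ 1_N), w = p*·1_N + v, and let Δu, Δv ∈ ℝ^{N−1} be the difference vectors of u and v. Then for every λ > 0 the false positive and detection rates of the RSS-based likelihood ratio test coincide with those of the DRSS-based likelihood ratio test at the same threshold; explicitly, with q_R = (w − u)ᵀ R⁻¹ (w − u) and q_D = (Δv − Δu)ᵀ D⁻¹ (Δv − Δu), one has q_R = q_D > 0, and hence Q((ln λ + q_R/2)/√q_R) = Q((ln λ + q_D/2)/√q_D) and Q((ln λ − q_R/2)/√q_R) = Q((ln λ − q_D/2)/√q_D). -/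
open Matrix

theorem diffMatrix_mulVec_aux {n : ℕ} (R : Matrix (Fin (n + 2)) (Fin (n + 2)) ℝ)
    (hR : R.IsSymm) (y : Fin (n + 2) → ℝ) (hy : ∑ i, y i = 0) :
    (diffMatrix R).mulVec (fun k => y k.castSucc) = diffVec (R.mulVec y) := by
  have hs : ∀ i j, R i j = R j i := fun i j => hR.apply j i
  rw [Fin.sum_univ_castSucc] at hy
  funext m
  simp only [Matrix.mulVec, dotProduct, diffVec, diffMatrix]
  rw [Fin.sum_univ_castSucc (f := fun i => R m.castSucc i * y i),
    Fin.sum_univ_castSucc (f := fun i => R (Fin.last (n + 1)) i * y i)]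
  have e : ∀ k : Fin (n + 1), (R (Fin.last (n + 1)) (Fin.last (n + 1)) + R m.castSucc k.castSucc
      - R m.castSucc (Fin.last (n + 1)) - R k.castSucc (Fin.last (n + 1))) * y k.castSucc
      = (R (Fin.last (n + 1)) (Fin.last (n + 1)) - R m.castSucc (Fin.last (n + 1))) * y k.castSucc
        + R m.castSucc k.castSucc * y k.castSucc - R (Fin.last (n + 1)) k.castSucc * y k.castSucc := by
    intro k
    rw [hs k.castSucc (Fin.last (n + 1))]
    ring
  rw [Finset.sum_congr rfl (fun k _ => e k), Finset.sum_sub_distrib, Finset.sum_add_distrib,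
    ← Finset.mul_sum, eq_neg_of_add_eq_zero_left hy]
  ring

theorem diffVec_dot_aux {n : ℕ} (z y : Fin (n + 2) → ℝ) (hy : ∑ i, y i = 0) :
    diffVec z ⬝ᵥ (fun k => y k.castSucc) = z ⬝ᵥ y := by
  rw [Fin.sum_univ_castSucc] at hy
  simp only [dotProduct, diffVec]
  rw [Fin.sum_univ_castSucc (f := fun i => z i * y i)]
  simp only [sub_mul]
  rw [Finset.sum_sub_distrib, ← Finset.mul_sum, eq_neg_of_add_eq_zero_left hy]
  ring

theorem diffMatrix_isUnit_aux {n : ℕ} (R : Matrix (Fin (n + 2)) (Fin (n + 2)) ℝ)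
    (hR : R.IsSymm) (hRpd : R.PosDef) : IsUnit (diffMatrix R) := by
  rw [← Matrix.mulVec_injective_iff_isUnit]
  apply (injective_iff_map_eq_zero (diffMatrix R).mulVecLin).2
  intro x hx
  rw [Matrix.mulVecLin_apply] at hx
  let y : Fin (n + 2) → ℝ := Fin.snoc x (-∑ i, x i)
  have hyx : (fun k : Fin (n + 1) => y k.castSucc) = x := by
    funext k
    simp [y]
  have hy : ∑ i, y i = 0 := by
    rw [Fin.sum_univ_castSucc]
    simp [y]
  have h1 := diffMatrix_mulVec_aux R hR y hy
  have h2 := diffVec_dot_aux (R.mulVec y) y hy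
  rw [hyx, hx] at h1
  rw [← h1, zero_dotProduct, dotProduct_comm] at h2
  by_contra hne
  have hy0 : y ≠ 0 := by
    intro h0
    apply hne
    rw [← hyx, h0]
    rfl
  have := hRpd.dotProduct_mulVec_pos hy0
  simp only [star_trivial] at this
  linarith

/-- Theorem 3: for `v − u` not a multiple of the all-ones vector, with
`p* = ((u−v)ᵀ R⁻¹ 1)/(1ᵀ R⁻¹ 1)` and `w = p*·1 + v`, the standardized separations
`q_R = (w−u)ᵀ R⁻¹ (w−u)` and `q_D = (Δv−Δu)ᵀ D⁻¹ (Δv−Δu)` satisfy `q_R = q_D > 0`,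
hence the RSS- and DRSS-based LVSs have identical false positive and detection rates
at every threshold `λ > 0`. -/
theorem rss_drss_identical_performance
    (n : ℕ) (R : Matrix (Fin (n + 2)) (Fin (n + 2)) ℝ)
    (hRsymm : R.IsSymm) (hRpd : R.PosDef)
    (u v : Fin (n + 2) → ℝ)
    (hvu : ∀ c : ℝ, v - u ≠ c • (fun _ => (1 : ℝ))) :
    let ones : Fin (n + 2) → ℝ := fun _ => (1 : ℝ)
    let pstar : ℝ := ((u - v) ⬝ᵥ (R⁻¹).mulVec ones) / (ones ⬝ᵥ (R⁻¹).mulVec ones)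
    let w : Fin (n + 2) → ℝ := pstar • ones + v
    let D := diffMatrix R
    let qR : ℝ := (w - u) ⬝ᵥ (R⁻¹).mulVec (w - u)
    let qD : ℝ := (diffVec v - diffVec u) ⬝ᵥ (D⁻¹).mulVec (diffVec v - diffVec u)
    qR = qD ∧ 0 < qD ∧
      ∀ lam : ℝ, 0 < lam →
        gaussQ ((Real.log lam + qR / 2) / Real.sqrt qR)
            = gaussQ ((Real.log lam + qD / 2) / Real.sqrt qD) ∧
          gaussQ ((Real.log lam - qR / 2) / Real.sqrt qR)
            = gaussQ ((Real.log lam - qD / 2) / Real.sqrt qD) := by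
  intro ones pstar w D qR qD
  have hones : ones ≠ 0 := fun h => one_ne_zero (α := ℝ) (congrFun h 0)
  have hRi : (R⁻¹).PosDef := hRpd.inv
  have hden : 0 < ones ⬝ᵥ (R⁻¹).mulVec ones := by
    simpa using hRi.dotProduct_mulVec_pos hones
  have hz0 : w - u ≠ 0 := by
    intro h
    apply hvu (-pstar)
    funext i
    have := congrFun h i
    simp [w, ones] at this ⊢
    linarith
  have hqR : 0 < qR := by
    have h := hRi.dotProduct_mulVec_pos hz0
    rwa [star_trivial] at h
  have hdet : IsUnit R.det := (Matrix.isUnit_iff_isUnit_det R).1 hRpd.isUnit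
  have hdD : IsUnit D.det :=
    (Matrix.isUnit_iff_isUnit_det D).1 (diffMatrix_isUnit_aux R hRsymm hRpd)
  set y := (R⁻¹).mulVec (w - u) with hydef
  have hRy : R.mulVec y = w - u := by
    rw [hydef, Matrix.mulVec_mulVec, Matrix.mul_nonsing_inv _ hdet, Matrix.one_mulVec]
  have hRis : (R⁻¹)ᵀ = R⁻¹ := by
    rw [Matrix.transpose_nonsing_inv, hRsymm.eq]
  have hy : ∑ i, y i = 0 := by
    have h1 : ∑ i, y i = (w - u) ⬝ᵥ (R⁻¹).mulVec ones := by
      rw [Matrix.dotProduct_mulVec, ← Matrix.mulVec_transpose, hRis, ← hydef]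
      simp [dotProduct, ones]
    have h2 : w - u = pstar • ones - (u - v) := by
      simp only [w]
      abel
    rw [h1, h2, sub_dotProduct, smul_dotProduct, smul_eq_mul, div_mul_cancel₀ _ hden.ne', sub_self]
  have hdv : diffVec v - diffVec u = diffVec (w - u) := by
    funext i
    simp [diffVec, w, ones]
    ring
  have heq : qR = qD := by
    have h1 := diffMatrix_mulVec_aux R hRsymm y hy
    have h2 : (D⁻¹).mulVec (diffVec (w - u)) = fun k => y k.castSucc := by
      rw [← hRy, ← h1, Matrix.mulVec_mulVec, Matrix.nonsing_inv_mul _ hdD, Matrix.one_mulVec]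
    simp only [qR, qD]
    rw [hdv, h2, diffVec_dot_aux _ _ hy]
  refine ⟨heq, heq ▸ hqR, fun lam _ => ?_⟩
  rw [heq]
  exact ⟨rfl, rfl⟩
end
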